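/- Non-integrability along periodic orbits (Lemma A.4(ii)). Let b be an admissible vector field with global flow X and Jacobian factor J, and let U : ℝ^d → ℝ be continuous. Suppose x ∈ ℝ^d lies on a periodic orbit, i.e. X τ x = x for some τ > 0. Then the nonnegative function t ↦ exp(−U(X t x)) · J t x is not Lebesgue integrable on ℝ; equivalently, its Lebesgue integral over ℝ (as a value in [0,∞]) is ∞. -/

import Mathlib

open MeasureTheory Filter

noncomputable section

/-- Euclidean state space ℝ^d. -/
abbrev Euc (d : ℕ) := EuclideanSpace ℝ (Fin d)

/-- Divergence of a vector field: trace of the Fréchet derivative. -/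
def vdiv {d : ℕ} (b : Euc d → Euc d) (x : Euc d) : ℝ :=
  LinearMap.trace ℝ (Euc d) (fderiv ℝ b x).toLinearMap

/-- A vector field is admissible if it is C¹ with globally bounded derivative. -/
def Admissible {d : ℕ} (b : Euc d → Euc d) : Prop :=
  ContDiff ℝ 1 b ∧ ∃ C : ℝ, ∀ x, ‖fderiv ℝ b x‖ ≤ C

/-- A global flow of the vector field `b`. -/
def IsGlobalFlow {d : ℕ} (b : Euc d → Euc d) (X : ℝ → Euc d → Euc d) : Prop :=
  (∀ x, X 0 x = x) ∧
  (∀ t s : ℝ, ∀ x, X (t + s) x = X t (X s x)) ∧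
  (∀ x : Euc d, ∀ t : ℝ, HasDerivAt (fun τ => X τ x) (b (X t x)) t)

/-- Jacobian factor of the flow: J t x = exp(∫₀ᵗ div b(X s x) ds). -/
def Jac {d : ℕ} (b : Euc d → Euc d) (X : ℝ → Euc d → Euc d) (t : ℝ) (x : Euc d) : ℝ :=
  Real.exp (∫ s in (0:ℝ)..t, vdiv b (X s x))

/-!
The Jacobian factor is a multiplicative cocycle over the flow, so along a `τ`-periodic orbit the
positive function `g t = exp (-U (X t x)) * J t x` satisfies `g (t + τ) = c * g t` with
`c = J τ x`. If `1 ≤ c`, then `g` does not decrease under translation by `τ`, which maps a half-line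
`[a, ∞)` into itself; splitting off `[a, a + τ)` gives `∫_[a, ∞) g ≥ ∫_[a, a + τ) g + ∫_[a, ∞) g`,
which forces the integral to be infinite. If `c ≤ 1`, the same applies to translation by `-τ` and
`(-∞, a + τ)`.
-/

section Lintegral

open Set
open scoped ENNReal

theorem setLIntegral_eq_top_of_mapsTo_of_le_comp {α : Type*} [MeasurableSpace α] {μ : Measure α}
    {T : α → α} (hT : MeasurePreserving T μ μ) (hTe : MeasurableEmbedding T) {s : Set α}
    (hs : MeasurableSet s) (hTs : MapsTo T s s) {f : α → ℝ≥0∞} (hf : ∀ x ∈ s, f x ≤ f (T x))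
    (hf₀ : ∫⁻ x in s \ T '' s, f x ∂μ ≠ 0) :
    ∫⁻ x in s, f x ∂μ = ∞ := by
  have hsplit : ∫⁻ x in T '' s, f x ∂μ + ∫⁻ x in s \ T '' s, f x ∂μ = ∫⁻ x in s, f x ∂μ := by
    simpa only [inter_eq_self_of_subset_right hTs.image_subset] using
      lintegral_inter_add_sdiff f s (hTe.measurableSet_image.2 hs)
  have himage : ∫⁻ x in s, f x ∂μ ≤ ∫⁻ x in T '' s, f x ∂μ := by
    rw [← hT.setLIntegral_comp_emb hTe]
    exact setLIntegral_mono' hs hf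
  by_contra htop
  refine (ENNReal.lt_add_right htop hf₀).not_ge ?_
  calc ∫⁻ x in s, f x ∂μ + ∫⁻ x in s \ T '' s, f x ∂μ
      ≤ ∫⁻ x in T '' s, f x ∂μ + ∫⁻ x in s \ T '' s, f x ∂μ := by gcongr
    _ = ∫⁻ x in s, f x ∂μ := hsplit

variable {G : Type*} [AddCommGroup G] [LinearOrder G] [IsOrderedAddMonoid G]
  [MeasurableSpace G] {μ : Measure G} {f : G → ℝ≥0∞} {τ : G}

theorem exists_setLIntegral_Ico_ne_zero [Archimedean G] (hτ : 0 < τ) (hf : ∫⁻ t, f t ∂μ ≠ 0) :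
    ∃ a, ∫⁻ t in Ico a (a + τ), f t ∂μ ≠ 0 := by
  by_contra! hzero
  refine hf (le_antisymm ?_ bot_le)
  calc ∫⁻ t, f t ∂μ = ∫⁻ t in ⋃ n : ℤ, Ico (n • τ) ((n + 1) • τ), f t ∂μ := by
        rw [iUnion_Ico_zsmul hτ, setLIntegral_univ]
    _ ≤ ∑' n : ℤ, ∫⁻ t in Ico (n • τ) ((n + 1) • τ), f t ∂μ := lintegral_iUnion_le _ _
    _ = 0 := by simp only [add_one_zsmul, hzero, tsum_zero]

variable [TopologicalSpace G] [OrderClosedTopology G] [OpensMeasurableSpace G] [MeasurableAdd G]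
  [μ.IsAddRightInvariant] {a : G}

theorem setLIntegral_Ici_eq_top_of_le_add (hτ : 0 ≤ τ) (hf : ∀ t ∈ Ici a, f t ≤ f (t + τ))
    (ha : ∫⁻ t in Ico a (a + τ), f t ∂μ ≠ 0) : ∫⁻ t in Ici a, f t ∂μ = ∞ := by
  refine setLIntegral_eq_top_of_mapsTo_of_le_comp (measurePreserving_add_right μ τ)
    (measurableEmbedding_addRight τ) measurableSet_Ici
    (fun t ht => le_add_of_le_of_nonneg ht hτ) hf ?_
  rwa [image_add_const_Ici, Ici_sdiff_Ici]

theorem setLIntegral_Iio_eq_top_of_add_le (hτ : 0 ≤ τ) (hf : ∀ t ∈ Iio a, f (t + τ) ≤ f t)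
    (ha : ∫⁻ t in Ico a (a + τ), f t ∂μ ≠ 0) : ∫⁻ t in Iio (a + τ), f t ∂μ = ∞ := by
  refine setLIntegral_eq_top_of_mapsTo_of_le_comp (measurePreserving_add_right μ (-τ))
    (measurableEmbedding_addRight (-τ)) measurableSet_Iio
    (fun t ht => add_lt_of_lt_of_nonpos ht (neg_nonpos.2 hτ))
    (fun t ht => by
      simpa only [neg_add_cancel_right] using hf (t + -τ) (add_neg_lt_iff_lt_add.2 ht)) ?_
  rwa [image_add_const_Iio, add_neg_cancel_right, sdiff_eq, compl_Iio, inter_comm, Ici_inter_Iio]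

theorem lintegral_eq_top_of_add_eq_mul [Archimedean G] {c : ℝ≥0∞} (hτ : 0 < τ)
    (hf : ∀ t, f (t + τ) = c * f t) (hf₀ : ∫⁻ t, f t ∂μ ≠ 0) : ∫⁻ t, f t ∂μ = ∞ := by
  obtain ⟨a, ha⟩ := exists_setLIntegral_Ico_ne_zero hτ hf₀
  refine top_unique ?_
  rcases le_total 1 c with hc | hc
  · rw [← setLIntegral_Ici_eq_top_of_le_add hτ.le
      (fun t _ => (le_mul_of_one_le_left' hc).trans_eq (hf t).symm) ha]
    exact setLIntegral_le_lintegral _ _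
  · rw [← setLIntegral_Iio_eq_top_of_add_le hτ.le
      (fun t _ => (hf t).trans_le (mul_le_of_le_one_left' hc)) ha]
    exact setLIntegral_le_lintegral _ _

end Lintegral

section Flow

variable {d : ℕ} {b : Euc d → Euc d} {X : ℝ → Euc d → Euc d}

theorem continuous_vdiv (hb : ContDiff ℝ 1 b) : Continuous (vdiv b) :=
  (LinearMap.continuous_of_finiteDimensional
    (LinearMap.trace ℝ (Euc d) ∘ₗ ContinuousLinearMap.coeLM ℝ)).comp
      (hb.continuous_fderiv one_ne_zero)

theorem IsGlobalFlow.continuous_orbit (hX : IsGlobalFlow b X) (x : Euc d) :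
    Continuous fun t => X t x :=
  continuous_iff_continuousAt.2 fun t => (hX.2.2 x t).continuousAt

theorem jac_pos (b : Euc d → Euc d) (X : ℝ → Euc d → Euc d) (t : ℝ) (x : Euc d) :
    0 < Jac b X t x :=
  Real.exp_pos _

theorem IsGlobalFlow.continuous_jac (hX : IsGlobalFlow b X) (hb : Continuous (vdiv b))
    (x : Euc d) : Continuous fun t => Jac b X t x :=
  Real.continuous_exp.comp <| intervalIntegral.continuous_primitive
    (fun _ _ => (hb.comp (hX.continuous_orbit x)).intervalIntegrable _ _) 0

theorem IsGlobalFlow.jac_add (hX : IsGlobalFlow b X) (hb : Continuous (vdiv b)) (t s : ℝ)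
    (x : Euc d) : Jac b X (t + s) x = Jac b X t (X s x) * Jac b X s x := by
  have hint : ∀ u v, IntervalIntegrable (fun r => vdiv b (X r x)) volume u v :=
    (hb.comp (hX.continuous_orbit x)).intervalIntegrable
  have hshift : ∫ r in (0 : ℝ)..t, vdiv b (X r (X s x)) = ∫ r in s..(t + s), vdiv b (X r x) := by
    simp only [← hX.2.1, intervalIntegral.integral_comp_add_right (fun r => vdiv b (X r x)),
      zero_add]
  rw [Jac, Jac, Jac, ← Real.exp_add, hshift, add_comm (∫ _ in s..(t + s), _),
    intervalIntegral.integral_add_adjacent_intervals (hint 0 s) (hint s (t + s))]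

theorem stmt_9_general (hb : ContDiff ℝ 1 b) (hX : IsGlobalFlow b X) {U : Euc d → ℝ}
    (hU : Measurable U) {x : Euc d} {τ : ℝ} (hτ : 0 < τ) (hper : X τ x = x) :
    ¬ Integrable (fun t : ℝ => Real.exp (-(U (X t x))) * Jac b X t x) ∧
    (∫⁻ t : ℝ, ENNReal.ofReal (Real.exp (-(U (X t x))) * Jac b X t x)) = ⊤ := by
  set g : ℝ → ℝ := fun t => Real.exp (-(U (X t x))) * Jac b X t x
  have hg_pos (t : ℝ) : 0 < g t := mul_pos (Real.exp_pos _) (jac_pos b X t x)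
  have hg_meas : Measurable g :=
    (hU.comp (hX.continuous_orbit x).measurable).neg.exp.mul
      (hX.continuous_jac (continuous_vdiv hb) x).measurable
  have hg_shift (t : ℝ) : g (t + τ) = Jac b X τ x * g t := by
    simp only [g, hX.2.1, hX.jac_add (continuous_vdiv hb), hper]
    ring
  have hg_lintegral_ne_zero : ∫⁻ t, ENNReal.ofReal (g t) ≠ 0 := by
    have hsupport : Function.support (fun t => ENNReal.ofReal (g t)) = Set.univ :=
      Set.eq_univ_of_forall fun t => (ENNReal.ofReal_pos.2 (hg_pos t)).ne'
    refine ((lintegral_pos_iff_support hg_meas.ennreal_ofReal).2 ?_).ne'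
    simp only [hsupport, Real.volume_univ, ENNReal.zero_lt_top]
  have hg_lintegral : ∫⁻ t, ENNReal.ofReal (g t) = ⊤ :=
    lintegral_eq_top_of_add_eq_mul hτ
      (fun t => by rw [hg_shift, ENNReal.ofReal_mul (jac_pos b X τ x).le]) hg_lintegral_ne_zero
  exact ⟨fun hg_int => hg_int.lintegral_lt_top.ne hg_lintegral, hg_lintegral⟩

end Flow

/-- Non-integrability along periodic orbits (Lemma A.4(ii)). -/
theorem stmt_9 {d : ℕ} (hd : 0 < d)
    (b : Euc d → Euc d) (hb : Admissible b)
    (X : ℝ → Euc d → Euc d) (hX : IsGlobalFlow b X)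
    (U : Euc d → ℝ) (hUc : Continuous U)
    (x : Euc d) (τ : ℝ) (hτ : 0 < τ) (hper : X τ x = x) :
    ¬ Integrable (fun t : ℝ => Real.exp (-(U (X t x))) * Jac b X t x) ∧
    (∫⁻ t : ℝ, ENNReal.ofReal (Real.exp (-(U (X t x))) * Jac b X t x)) = ⊤ :=
  stmt_9_general hb.1 hX hUc.measurable hτ hper
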